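/- Let G = (C, E) be a complete tournament with |C| = m candidates and let w ∈ Cop(G) be a Copeland winner of G with Copeland score σ_w. Then every smallest minimal support X for w ∈ Cop(G) satisfies: if w is a Condorcet winner then |X| = m − 1, and otherwise |X| = (m − 1)(m − 1 − σ_w). -/

import Mathlib

/-- `E` is the edge set of a complete (unweighted) tournament on `C`:
asymmetric and total on distinct candidates. -/
def IsCompleteT {C : Type*} (E : Finset (C × C)) : Prop :=
  (∀ x y : C, (x, y) ∈ E → (y, x) ∉ E) ∧
  (∀ x y : C, x ≠ y → (x, y) ∈ E ∨ (y, x) ∈ E)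

/-- The Copeland score of `c`: the number of candidates beaten by `c`. -/
def copScore {C : Type*} [Fintype C] [DecidableEq C] (E : Finset (C × C)) (c : C) : ℕ :=
  (Finset.univ.filter (fun c' => (c, c') ∈ E)).card

/-- `c` is a Copeland winner: its Copeland score is maximal. -/
def InCop {C : Type*} [Fintype C] [DecidableEq C] (E : Finset (C × C)) (c : C) : Prop :=
  ∀ c' : C, copScore E c' ≤ copScore E c

/-- `w` is a necessary winner of Copeland in the partial tournament `X`. -/
def NWCop {C : Type*} [Fintype C] [DecidableEq C] (X : Finset (C × C)) (w : C) : Prop :=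
  ∀ E' : Finset (C × C), X ⊆ E' → IsCompleteT E' → InCop E' w

/-- `X` is a minimal support for `w ∈ Cop(G)`. -/
def MSCop {C : Type*} [Fintype C] [DecidableEq C] (G X : Finset (C × C)) (w : C) : Prop :=
  X ⊆ G ∧ NWCop X w ∧ ∀ Y : Finset (C × C), Y ⊂ X → ¬ NWCop Y w

/-- `X` is a smallest minimal support for `w ∈ Cop(G)`. -/
def SMSCop {C : Type*} [Fintype C] [DecidableEq C] (G X : Finset (C × C)) (w : C) : Prop :=
  MSCop G X w ∧ ∀ Y : Finset (C × C), MSCop G Y w → X.card ≤ Y.card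

/-- `w` is a Condorcet winner of `G`: it beats every other candidate. -/
def IsCondorcet {C : Type*} (G : Finset (C × C)) (w : C) : Prop :=
  ∀ c : C, c ≠ w → (w, c) ∈ G

/-!
Among the completions of a partial tournament `X`, the worst one for `w` against a rival `c` lets
`w` lose and `c` win all their undecided duels. Hence `w` is a necessary Copeland winner iff every
rival `c` has at least `|C| - 1 - s` losses in `X`, where `s` is the score of `w` in `X`. Summing
the losses over the rivals gives `|X| ≥ (|C| - 1) (|C| - 1 - s)`, and `s` is at most the score of
`w` in `G`. The bound is attained by keeping, for each rival, its loss against `w`, if any, and as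
many of its other losses as needed: `w` then keeps its whole score. When `w` beats everyone in `G`,
the size is `|C| - 1` instead: either all these wins are kept in `X`, or every rival still needs a
loss.
-/

/-- `E` is the edge set of a partial tournament on `C`: it is asymmetric, but unlike for
`IsCompleteT` some duels may be undecided. -/
def IsPartialT {C : Type*} (E : Finset (C × C)) : Prop :=
  ∀ x y : C, (x, y) ∈ E → (y, x) ∉ E

/-- The number of candidates that beat `c`, dual to `copScore`. In a partial tournament it limits
the score that `c` can reach in a completion. -/
def lossCount {C : Type*} [Fintype C] [DecidableEq C] (E : Finset (C × C)) (c : C) : ℕ :=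
  (Finset.univ.filter (fun c' => (c', c) ∈ E)).card

namespace IsPartialT

lemma subset {C : Type*} {X E : Finset (C × C)} (hE : IsPartialT E) (hXE : X ⊆ E) : IsPartialT X :=
  fun x y hxy hyx => hE x y (hXE hxy) (hXE hyx)

lemma ne_of_mem {C : Type*} {X : Finset (C × C)} (hX : IsPartialT X) {a b : C}
    (hab : (a, b) ∈ X) : a ≠ b := by
  rintro rfl
  exact hX a a hab hab

lemma exists_completion {C : Type*} [Finite C] {X : Finset (C × C)} (hX : IsPartialT X) :
    ∃ E, X ⊆ E ∧ IsCompleteT E := by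
  classical
  cases nonempty_fintype C
  let rank := Fintype.equivFin C
  let E : Finset (C × C) :=
    Finset.univ.filter fun p => p ∈ X ∨ (p.2, p.1) ∉ X ∧ rank p.1 < rank p.2
  have mem_E (a b : C) : (a, b) ∈ E ↔ (a, b) ∈ X ∨ (b, a) ∉ X ∧ rank a < rank b := by simp [E]
  refine ⟨E, fun p hp => by simp [E, hp], fun a b => ?_, fun a b hab => ?_⟩
  · have := hX a b
    grind
  · have : rank a ≠ rank b := rank.injective.ne hab
    grind

end IsPartialT

section Copeland

variable {C : Type*} [Fintype C] [DecidableEq C] {X E G : Finset (C × C)} {w c : C} {k : ℕ}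

lemma copScore_mono (hXE : X ⊆ E) (c : C) : copScore X c ≤ copScore E c :=
  Finset.card_le_card <| Finset.monotone_filter_right _ fun _ _ h => hXE h

lemma lossCount_mono (hXE : X ⊆ E) (c : C) : lossCount X c ≤ lossCount E c :=
  Finset.card_le_card <| Finset.monotone_filter_right _ fun _ _ h => hXE h

lemma lossCount_pos_of_mem (h : (w, c) ∈ X) : 0 < lossCount X c :=
  Finset.card_pos.2 ⟨w, by simpa using h⟩

lemma copScore_le_card (X : Finset (C × C)) (w : C) : copScore X w ≤ X.card :=
  Finset.card_le_card_of_injOn (fun c => (w, c)) (fun c hc => by simpa using hc)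
    (Prod.mk_right_injective w).injOn

lemma card_eq_sum_lossCount (X : Finset (C × C)) : X.card = ∑ c, lossCount X c := by
  simp only [lossCount, Finset.card_filter, ← Fintype.sum_prod_type_right']
  simp

namespace IsPartialT

lemma copScore_eq_card_filter_erase (hX : IsPartialT X) (w : C) :
    copScore X w = ((Finset.univ.erase w).filter fun c => (w, c) ∈ X).card := by
  rw [Finset.filter_erase, Finset.erase_eq_of_notMem, copScore]
  simpa using fun hww => hX.ne_of_mem hww rfl

lemma copScore_le (hX : IsPartialT X) (w : C) : copScore X w ≤ Fintype.card C - 1 := by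
  rw [hX.copScore_eq_card_filter_erase, ← Finset.card_univ,
    ← Finset.card_erase_of_mem (Finset.mem_univ w)]
  exact Finset.card_filter_le _ _

lemma isCondorcet_iff_copScore_eq (hX : IsPartialT X) :
    IsCondorcet X w ↔ copScore X w = Fintype.card C - 1 := by
  rw [hX.copScore_eq_card_filter_erase, ← Finset.card_univ,
    ← Finset.card_erase_of_mem (Finset.mem_univ w), Finset.card_filter_eq_iff]
  simp [IsCondorcet]

end IsPartialT

lemma IsCompleteT.copScore_add_lossCount (hE : IsCompleteT E) (c : C) :
    copScore E c + lossCount E c = Fintype.card C - 1 := by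
  obtain ⟨hasymm, htotal⟩ := hE
  have hdisj : Disjoint (Finset.univ.filter fun x => (c, x) ∈ E)
      (Finset.univ.filter fun x => (x, c) ∈ E) :=
    Finset.disjoint_filter.2 fun x _ => hasymm c x
  rw [copScore, lossCount, ← Finset.card_union_of_disjoint hdisj, ← Finset.card_univ,
    ← Finset.card_erase_of_mem (Finset.mem_univ c)]
  congr 1
  grind

lemma IsPartialT.exists_completion_copScore_eq_lossCount_eq (hX : IsPartialT X) (hcw : c ≠ w) :
    ∃ E, X ⊆ E ∧ IsCompleteT E ∧ copScore E w = copScore X w ∧ lossCount E c = lossCount X c := by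
  let Y : Finset (C × C) := Finset.univ.filter fun p =>
    p ∈ X ∨ (p.2, p.1) ∉ X ∧ p.1 ≠ p.2 ∧ (p.1 = c ∨ p.2 = w)
  have mem_Y (a b : C) :
      (a, b) ∈ Y ↔ (a, b) ∈ X ∨ (b, a) ∉ X ∧ a ≠ b ∧ (a = c ∨ b = w) := by simp [Y]
  have hXY : X ⊆ Y := fun p hp => by simp [Y, hp]
  have hY : IsPartialT Y := fun a b => by
    have := hX a b
    grind
  obtain ⟨E, hYE, hE⟩ := hY.exists_completion
  have hXE := hXY.trans hYE
  have wins_of_w (x : C) (hx : (w, x) ∈ E) : (w, x) ∈ X := by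
    by_contra hwx
    have hne := IsPartialT.ne_of_mem hE.1 hx
    exact hE.1 w x hx (hYE ((mem_Y x w).2 (.inr ⟨hwx, hne.symm, .inr rfl⟩)))
  have losses_of_c (x : C) (hx : (x, c) ∈ E) : (x, c) ∈ X := by
    by_contra hxc
    have hne := IsPartialT.ne_of_mem hE.1 hx
    exact hE.1 x c hx (hYE ((mem_Y c x).2 (.inr ⟨hxc, hne.symm, .inl rfl⟩)))
  exact ⟨E, hXE, hE,
    congrArg Finset.card (Finset.filter_congr fun x _ => ⟨wins_of_w x, @hXE _⟩),
    congrArg Finset.card (Finset.filter_congr fun x _ => ⟨losses_of_c x, @hXE _⟩)⟩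

lemma NWCop.mono (hX : NWCop X w) (hXE : X ⊆ E) : NWCop E w :=
  fun E' hE' => hX E' (hXE.trans hE')

theorem IsPartialT.nwCop_iff (hX : IsPartialT X) :
    NWCop X w ↔ ∀ c, c ≠ w → Fintype.card C - 1 - copScore X w ≤ lossCount X c := by
  constructor
  · intro hw c hcw
    obtain ⟨E, hXE, hE, hscore, hloss⟩ := hX.exists_completion_copScore_eq_lossCount_eq hcw
    have := hw E hXE hE c
    have := hE.copScore_add_lossCount c
    omega
  · intro hloss E hXE hE c
    rcases eq_or_ne c w with rfl | hcw
    · exact le_rfl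
    · have := hloss c hcw
      have := hE.copScore_add_lossCount c
      have := copScore_mono hXE w
      have := lossCount_mono hXE c
      omega

lemma mul_le_card_of_forall_le_lossCount (h : ∀ c, c ≠ w → k ≤ lossCount X c) :
    (Fintype.card C - 1) * k ≤ X.card :=
  calc (Fintype.card C - 1) * k = (Finset.univ.erase w).card • k := by
        rw [Finset.card_erase_of_mem (Finset.mem_univ w), Finset.card_univ, smul_eq_mul]
    _ ≤ ∑ c ∈ Finset.univ.erase w, lossCount X c :=
        Finset.card_nsmul_le_sum _ _ _ fun c hc => h c (Finset.ne_of_mem_erase hc)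
    _ ≤ ∑ c, lossCount X c := Finset.sum_le_sum_of_subset (Finset.erase_subset _ _)
    _ = X.card := (card_eq_sum_lossCount X).symm

lemma card_eq_mul_of_forall_lossCount_eq (hw : lossCount X w = 0)
    (h : ∀ c, c ≠ w → lossCount X c = k) : X.card = (Fintype.card C - 1) * k :=
  calc X.card = ∑ c ∈ Finset.univ.erase w, lossCount X c := by
        rw [card_eq_sum_lossCount, Finset.sum_erase _ hw]
    _ = (Finset.univ.erase w).card • k :=
        Finset.sum_eq_card_nsmul fun c hc => h c (Finset.ne_of_mem_erase hc)
    _ = (Fintype.card C - 1) * k := by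
        rw [Finset.card_erase_of_mem (Finset.mem_univ w), Finset.card_univ, smul_eq_mul]

namespace NWCop

lemma mul_le_card (hw : NWCop X w) (hX : IsPartialT X) :
    (Fintype.card C - 1) * (Fintype.card C - 1 - copScore X w) ≤ X.card :=
  mul_le_card_of_forall_le_lossCount (hX.nwCop_iff.1 hw)

lemma card_sub_one_le_card (hw : NWCop X w) (hX : IsPartialT X) :
    Fintype.card C - 1 ≤ X.card := by
  rcases (hX.copScore_le w).eq_or_lt with hall | hlt
  · exact hall ▸ copScore_le_card X w
  · exact (Nat.le_mul_of_pos_right _ (Nat.sub_pos_of_lt hlt)).trans (hw.mul_le_card hX)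

lemma max_le_lossCount (hw : NWCop G w) (hG : IsPartialT G) (hcw : c ≠ w) :
    max 1 (Fintype.card C - 1 - copScore G w) ≤ lossCount G c := by
  have hloss := hG.nwCop_iff.1 hw c hcw
  refine max_le ?_ hloss
  rcases (hG.copScore_le w).eq_or_lt with hall | hlt
  · exact lossCount_pos_of_mem (hG.isCondorcet_iff_copScore_eq.2 hall c hcw)
  · omega

end NWCop

lemma exists_dominators_card_eq (hk : 1 ≤ k) (hc : k ≤ lossCount G c) (w : C) :
    ∃ S : Finset C, (∀ x ∈ S, (x, c) ∈ G) ∧ ((w, c) ∈ G → w ∈ S) ∧ S.card = k := by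
  obtain ⟨S, hS, hSG, hcard⟩ := Finset.exists_subsuperset_card_eq
    (s := ({w} : Finset C).filter fun x => (x, c) ∈ G)
    (t := Finset.univ.filter fun x => (x, c) ∈ G)
    (Finset.filter_subset_filter _ (Finset.subset_univ _))
    ((Finset.card_filter_le _ _).trans (by simpa using hk)) hc
  exact ⟨S, fun x hx => by simpa using hSG hx, fun h => hS (by simpa using h), hcard⟩

lemma IsPartialT.exists_subset_lossCount_eq (hG : IsPartialT G) (hk : 1 ≤ k)
    (hloss : ∀ c, c ≠ w → k ≤ lossCount G c) :
    ∃ X ⊆ G, copScore X w = copScore G w ∧ lossCount X w = 0 ∧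
      ∀ c, c ≠ w → lossCount X c = k := by
  choose! S hSG hSw hScard using fun c hc => exists_dominators_card_eq hk (hloss c hc) w
  let X : Finset (C × C) := Finset.univ.filter fun p => p.2 ≠ w ∧ p.1 ∈ S p.2
  have mem_X (a b : C) : (a, b) ∈ X ↔ b ≠ w ∧ a ∈ S b := by simp [X]
  have hXG : X ⊆ G := fun ⟨a, b⟩ hab =>
    let ⟨hbw, haS⟩ := (mem_X a b).1 hab
    hSG b hbw a haS
  have wins_of_w (x : C) (hx : (w, x) ∈ G) : (w, x) ∈ X :=
    have hxw := (hG.ne_of_mem hx).symm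
    (mem_X w x).2 ⟨hxw, hSw x hxw hx⟩
  refine ⟨X, hXG,
    congrArg Finset.card (Finset.filter_congr fun x _ => ⟨@hXG _, wins_of_w x⟩), ?_, ?_⟩
  · simp [lossCount, mem_X]
  · intro c hcw
    simp [lossCount, mem_X, hcw, hScard]

lemma NWCop.exists_subset_card_eq (hw : NWCop G w) (hG : IsPartialT G) :
    ∃ X ⊆ G, NWCop X w ∧
      X.card = (Fintype.card C - 1) * max 1 (Fintype.card C - 1 - copScore G w) := by
  obtain ⟨X, hXG, hscore, hlossw, hloss⟩ :=
    hG.exists_subset_lossCount_eq (le_max_left 1 _) fun _ => hw.max_le_lossCount hG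
  refine ⟨X, hXG, (hG.subset hXG).nwCop_iff.2 fun c hcw => ?_,
    card_eq_mul_of_forall_lossCount_eq hlossw hloss⟩
  rw [hscore, hloss c hcw]
  exact le_max_right _ _

lemma NWCop.exists_msCop_subset (hw : NWCop X w) (hXG : X ⊆ G) : ∃ Y ⊆ X, MSCop G Y w := by
  obtain ⟨Y, hYX, hY⟩ := exists_minimal_le_of_wellFoundedLT (NWCop · w) X hw
  exact ⟨Y, hYX, hYX.trans hXG, hY.prop, fun _ => hY.not_prop_of_lt⟩

lemma SMSCop.card_le (hX : SMSCop G X w) (hE : NWCop E w) (hEG : E ⊆ G) : X.card ≤ E.card := by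
  obtain ⟨Y, hYE, hY⟩ := hE.exists_msCop_subset hEG
  exact (hX.2 Y hY).trans (Finset.card_le_card hYE)

theorem SMSCop.card_eq (hX : SMSCop G X w) (hG : IsPartialT G) :
    X.card = (Fintype.card C - 1) * max 1 (Fintype.card C - 1 - copScore G w) := by
  obtain ⟨hXG, hw, -⟩ := hX.1
  have hXpartial := hG.subset hXG
  apply le_antisymm
  · obtain ⟨Y, hYG, hY, hcard⟩ := (hw.mono hXG).exists_subset_card_eq hG
    exact hcard ▸ hX.card_le hY hYG
  · rw [mul_max_of_nonneg _ _ (Nat.zero_le _), mul_one]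
    refine max_le (hw.card_sub_one_le_card hXpartial) (le_trans ?_ (hw.mul_le_card hXpartial))
    gcongr
    exact copScore_mono hXG w

end Copeland

theorem stmt13_general {C : Type*} [Fintype C] [DecidableEq C]
    (m : ℕ) (hm : Fintype.card C = m)
    (G : Finset (C × C)) (hG : IsPartialT G) (w : C)
    (X : Finset (C × C)) (hX : SMSCop G X w) :
    (IsCondorcet G w → X.card = m - 1) ∧
    (¬ IsCondorcet G w → X.card = (m - 1) * (m - 1 - copScore G w)) := by
  subst hm
  have hcard := hX.card_eq hG
  have hscore := hG.copScore_le w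
  rw [hG.isCondorcet_iff_copScore_eq]
  refine ⟨fun hall => ?_, fun hnot => ?_⟩
  · rw [hcard, max_eq_left (by omega), mul_one]
  · rw [hcard, max_eq_right (by omega)]

/-- For a Copeland winner `w` with Copeland score `σ_w` of a complete tournament
on `m` candidates, every smallest minimal support `X` satisfies: if `w` is a
Condorcet winner then `|X| = m - 1`, and otherwise `|X| = (m-1)(m-1-σ_w)`. -/
theorem stmt13 {C : Type*} [Fintype C] [DecidableEq C] [Nonempty C]
    (m : ℕ) (hm : Fintype.card C = m)
    (G : Finset (C × C)) (hG : IsCompleteT G) (w : C) (hw : InCop G w)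
    (X : Finset (C × C)) (hX : SMSCop G X w) :
    (IsCondorcet G w → X.card = m - 1) ∧
    (¬ IsCondorcet G w → X.card = (m - 1) * (m - 1 - copScore G w)) :=
  stmt13_general m hm G hG.1 w X hX
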